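/- Let F be an algebraically closed field with characteristic ≠ 2 and ≠ 3. Then the derivation algebra of the algebra E5 with MSC [[1,0,0,-1],[-1,0,0,1]] is Der(E5) = { [[-t,t],[t,-t]] : t ∈ F }. -/

import Mathlib

/-!
The matrix `E5` has rank one: its multiplication is `u · v = β(u, v) w` with `w = e₁ - e₂` and
`β = diag(1, -1)`. Hence `D` is a derivation iff `β(Du, v) + β(u, Dv)` and `β(u, v)` become equal
after multiplying by `w` and by `Dw` respectively, that is, iff for some scalar `μ` the vector `w`
is an eigenvector of `D` with eigenvalue `μ` and `D` is an infinitesimal similitude of `β` with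
multiplier `μ`. Writing `D` as `[[a, b], [c, d]]`, these conditions read `a - b = d - c = μ` and
`2a = 2d = μ`, `b = c`; subtracting the first from the second leaves `a = -b` and `d = -c = -b`.
-/

open Matrix Kronecker

variable {F : Type*}

/-- The Kronecker (tensor) product of two `2 × 2` matrices, realized as a `4 × 4` matrix;
rows/columns are indexed in row-major order by the pairs `(1,1), (1,2), (2,1), (2,2)`. -/
def kron [CommRing F] (g h : Matrix (Fin 2) (Fin 2) F) : Matrix (Fin 4) (Fin 4) F :=
  Matrix.reindex finProdFinEquiv finProdFinEquiv (g ⊗ₖ h)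

/-- Two `2`-dimensional algebras given by matrices of structure constants `A, B`
are isomorphic iff `B = g · A · (g⁻¹ ⊗ g⁻¹)` for some `g ∈ GL(2, F)`. -/
def Isomorphic [Field F] (A B : Matrix (Fin 2) (Fin 4) F) : Prop :=
  ∃ g : GL (Fin 2) F,
    B = (g : Matrix (Fin 2) (Fin 2) F) * A *
        kron ((↑(g⁻¹) : Matrix (Fin 2) (Fin 2) F)) ((↑(g⁻¹) : Matrix (Fin 2) (Fin 2) F))

/-- The automorphism group of the algebra with MSC `E`, as a set of (invertible) `2 × 2`
matrices: `Aut(E) = {g ∈ GL(2,F) : g·E = E·(g ⊗ g)}`. -/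
def Aut [Field F] (E : Matrix (Fin 2) (Fin 4) F) : Set (Matrix (Fin 2) (Fin 2) F) :=
  {g | IsUnit g ∧ g * E = E * kron g g}

/-- The derivation algebra of the algebra with MSC `E`:
`Der(E) = { D : E·(D ⊗ I + I ⊗ D) = D·E }`. -/
def Der [Field F] (E : Matrix (Fin 2) (Fin 4) F) : Set (Matrix (Fin 2) (Fin 2) F) :=
  {D | E * (kron D 1 + kron 1 D) = D * E}

theorem vecMulVec_eq_vecMulVec_iff {m n : Type*} [Field F] {w v : m → F} {b c : n → F}
    (hw : w ≠ 0) (hb : b ≠ 0) :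
    vecMulVec w c = vecMulVec v b ↔ ∃ μ : F, v = μ • w ∧ c = μ • b := by
  constructor
  · intro h
    have entry (i j) : w i * c j = v i * b j := congrFun₂ h i j
    obtain ⟨i₀, hi₀ : w i₀ ≠ 0⟩ := Function.ne_iff.mp hw
    obtain ⟨j₀, hj₀ : b j₀ ≠ 0⟩ := Function.ne_iff.mp hb
    have hc (j) : c j = v i₀ / w i₀ * b j := by
      field_simp
      linear_combination entry i₀ j
    have hv (i) : v i = v i₀ / w i₀ * w i := by
      apply mul_right_cancel₀ hj₀
      linear_combination w i * hc j₀ - entry i j₀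
    exact ⟨v i₀ / w i₀, funext hv, funext hc⟩
  · rintro ⟨μ, rfl, rfl⟩
    rw [vecMulVec_smul, smul_vecMulVec]

/-- The rows of a `2 × 2` matrix, arranged into one row: the structure constants of the bilinear
form `β(u, v) = u ⬝ᵥ β *ᵥ v`. The transpose is there because `Matrix.vec` stacks columns,
whereas `kron` orders index pairs row by row. -/
def rowVec (β : Matrix (Fin 2) (Fin 2) F) : Fin 4 → F :=
  vec βᵀ ∘ (finProdFinEquiv (m := 2) (n := 2)).symm

theorem rowVec_injective :
    Function.Injective (rowVec : Matrix (Fin 2) (Fin 2) F → Fin 4 → F) := fun _ _ h =>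
  transpose_injective (vec_inj.mp ((Equiv.surjective _).injective_comp_right h))

/-- The matrix of structure constants of the algebra with multiplication `u · v = β(u, v) w`, all of
whose products lie on the line spanned by `w`. -/
def rankOneMSC [Mul F] (w : Fin 2 → F) (β : Matrix (Fin 2) (Fin 2) F) :
    Matrix (Fin 2) (Fin 4) F :=
  vecMulVec w (rowVec β)

section CommRing

variable [CommRing F]

theorem rankOneMSC_add (w : Fin 2 → F) (β γ : Matrix (Fin 2) (Fin 2) F) :
    rankOneMSC w (β + γ) = rankOneMSC w β + rankOneMSC w γ :=
  vecMulVec_add _ _ _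

theorem mul_rankOneMSC (D : Matrix (Fin 2) (Fin 2) F) (w : Fin 2 → F)
    (β : Matrix (Fin 2) (Fin 2) F) : D * rankOneMSC w β = rankOneMSC (D *ᵥ w) β :=
  mul_vecMulVec _ _ _

theorem rankOneMSC_mul_kron (w : Fin 2 → F) (β g h : Matrix (Fin 2) (Fin 2) F) :
    rankOneMSC w β * kron g h = rankOneMSC w (gᵀ * β * h) := by
  simp only [rankOneMSC, rowVec, kron, reindex_apply, vecMulVec_mul, submatrix_vecMul_equiv,
    Function.comp_assoc, Equiv.symm_symm, Equiv.symm_comp_self, Function.comp_id,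
    vec_vecMul_kronecker, transpose_mul, transpose_transpose, Matrix.mul_assoc]

theorem rankOneMSC_mul_kron_add_kron (w : Fin 2 → F) (β D : Matrix (Fin 2) (Fin 2) F) :
    rankOneMSC w β * (kron D 1 + kron 1 D) = rankOneMSC w (Dᵀ * β + β * D) := by
  rw [Matrix.mul_add, rankOneMSC_mul_kron, rankOneMSC_mul_kron, ← rankOneMSC_add,
    transpose_one, Matrix.mul_one, Matrix.one_mul]

theorem E5_eq_rankOneMSC :
    (!![1, 0, 0, -1; -1, 0, 0, 1] : Matrix (Fin 2) (Fin 4) F) =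
      rankOneMSC ![1, -1] !![1, 0; 0, -1] := by
  ext i j
  fin_cases i <;> fin_cases j <;>
    simp [rankOneMSC, rowVec, vecMulVec_apply, finProdFinEquiv, Fin.divNat, Fin.modNat]

theorem mulVec_one_neg_one_eq_smul_iff (D : Matrix (Fin 2) (Fin 2) F) (μ : F) :
    D *ᵥ ![1, -1] = μ • ![1, -1] ↔ D 0 0 - D 0 1 = μ ∧ D 1 0 - D 1 1 = -μ := by
  simp only [funext_iff, Fin.forall_fin_two, mulVec, dotProduct, Fin.sum_univ_two, Pi.smul_apply,
    cons_val_zero, cons_val_one, smul_eq_mul, mul_one, mul_neg, ← sub_eq_add_neg]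

theorem transpose_mul_add_mul_diag_eq_smul_iff (D : Matrix (Fin 2) (Fin 2) F) (μ : F) :
    Dᵀ * !![1, 0; 0, -1] + !![1, 0; 0, -1] * D = μ • !![1, 0; 0, -1] ↔
      2 * D 0 0 = μ ∧ D 0 1 = D 1 0 ∧ 2 * D 1 1 = μ := by
  simp only [← Matrix.ext_iff, Fin.forall_fin_two, Matrix.add_apply, Matrix.smul_apply,
    Matrix.mul_apply, Fin.sum_univ_two, transpose_apply, of_apply, cons_val_zero, cons_val_one,
    smul_eq_mul]
  grind

theorem exists_eigenvalue_eq_multiplier_iff (D : Matrix (Fin 2) (Fin 2) F) :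
    (∃ μ : F, D *ᵥ ![1, -1] = μ • ![1, -1] ∧
      Dᵀ * !![1, 0; 0, -1] + !![1, 0; 0, -1] * D = μ • !![1, 0; 0, -1]) ↔
      ∃ t : F, D = !![-t, t; t, -t] := by
  simp only [mulVec_one_neg_one_eq_smul_iff, transpose_mul_add_mul_diag_eq_smul_iff]
  constructor
  · rintro ⟨μ, ⟨h_fst, h_snd⟩, h_diag₀, h_symm, h_diag₁⟩
    have h₀₀ : D 0 0 = -D 0 1 := by linear_combination h_diag₀ - h_fst
    have h₁₁ : D 1 1 = -D 0 1 := by linear_combination h_diag₁ + h_snd + h_symm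
    refine ⟨D 0 1, (eta_fin_two D).trans ?_⟩
    rw [h₀₀, h₁₁, ← h_symm]
  · rintro ⟨t, rfl⟩
    refine ⟨-(2 * t), ?_⟩
    simp only [of_apply, cons_val_zero, cons_val_one]
    grind

end CommRing

section Field

variable [Field F] {w : Fin 2 → F} {β : Matrix (Fin 2) (Fin 2) F}

theorem rankOneMSC_eq_rankOneMSC_iff {v : Fin 2 → F} {γ : Matrix (Fin 2) (Fin 2) F}
    (hw : w ≠ 0) (hβ : β ≠ 0) :
    rankOneMSC w γ = rankOneMSC v β ↔ ∃ μ : F, v = μ • w ∧ γ = μ • β := by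
  have rowVec_ne_zero : rowVec β ≠ 0 := rowVec_injective.ne (a₂ := 0) hβ
  have rowVec_eq_smul_iff (μ : F) : rowVec γ = μ • rowVec β ↔ γ = μ • β :=
    rowVec_injective.eq_iff (b := μ • β)
  simp only [rankOneMSC, vecMulVec_eq_vecMulVec_iff hw rowVec_ne_zero, rowVec_eq_smul_iff]

theorem mem_der_rankOneMSC_iff (hw : w ≠ 0) (hβ : β ≠ 0) (D : Matrix (Fin 2) (Fin 2) F) :
    D ∈ Der (rankOneMSC w β) ↔ ∃ μ : F, D *ᵥ w = μ • w ∧ Dᵀ * β + β * D = μ • β := by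
  rw [Der, Set.mem_ofPred_eq, rankOneMSC_mul_kron_add_kron, mul_rankOneMSC,
    rankOneMSC_eq_rankOneMSC_iff hw hβ]

end Field

theorem der_E5_general (F : Type*) [Field F] :
    Der (!![1, 0, 0, -1; -1, 0, 0, 1] : Matrix (Fin 2) (Fin 4) F) =
      {D | ∃ t : F, D = !![-t, t; t, -t]} := by
  have hw : (![1, -1] : Fin 2 → F) ≠ 0 := fun h => one_ne_zero (congrFun h 0)
  have hβ : (!![1, 0; 0, -1] : Matrix (Fin 2) (Fin 2) F) ≠ 0 :=
    fun h => one_ne_zero (congrFun₂ h 0 0)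
  ext D
  rw [E5_eq_rankOneMSC, mem_der_rankOneMSC_iff hw hβ, exists_eigenvalue_eq_multiplier_iff,
    Set.mem_ofPred_eq]

theorem der_E5 (F : Type*) [Field F] [IsAlgClosed F]
    (h2 : ringChar F ≠ 2) (h3 : ringChar F ≠ 3) :
    Der (!![1, 0, 0, -1; -1, 0, 0, 1] : Matrix (Fin 2) (Fin 4) F) =
      {D | ∃ t : F, D = !![-t, t; t, -t]} :=
  der_E5_general F
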